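/- arXiv:1403.0446 — 2 statements merged into one kernel-verified Lean document; each statement's English description precedes it below -/
import Mathlib

section
/- Let z be a complex number with z³ = 1 and let m ≥ 1 be an integer, and set A = ℂ[t^{±1}]/((t − z)^m). Then the complex dimension of ℋ(A) is at most (m − 1)(m − 2)/2. -/
open LaurentPolynomial TensorProduct

set_option synthInstance.maxHeartbeats 1000000
set_option maxHeartbeats 1000000
noncomputable section

abbrev LQuot (K : Type) [Field K] (p : LaurentPolynomial K) : Type :=
  LaurentPolynomial K ⧸ Ideal.span {p}

/-- The wedge `a ∧ b ∧ c` as an element of the third exterior power. -/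
def wedge3 (K : Type) [Field K] (M : Type) [AddCommGroup M] [Module K M] (a b c : M) :
    ⋀[K]^3 M :=
  ⟨ExteriorAlgebra.ιMulti K 3 ![a, b, c],
    ExteriorAlgebra.ιMulti_range K 3 (Set.mem_range_self _)⟩

/-- The holonomy subspace of the third exterior power: the `K`-span of the elements
`β₁ ∧ β₂ ∧ β₃ - tβ₁ ∧ tβ₂ ∧ tβ₃`. -/
def wedgeHol (K : Type) [Field K] (M : Type) [AddCommGroup M]
    [Module (LaurentPolynomial K) M] [Module K M]
    [IsScalarTower K (LaurentPolynomial K) M] :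
    Submodule K ↥(⋀[K]^3 M) :=
  Submodule.span K { x | ∃ a b c : M,
    x = wedge3 K M a b c -
      wedge3 K M ((T 1 : LaurentPolynomial K) • a) ((T 1 : LaurentPolynomial K) • b)
        ((T 1 : LaurentPolynomial K) • c) }

/-- `ℋ(M)`: the quotient of the third exterior power by the holonomy subspace. -/
abbrev Hcal (K : Type) [Field K] (M : Type) [AddCommGroup M]
    [Module (LaurentPolynomial K) M] [Module K M]
    [IsScalarTower K (LaurentPolynomial K) M] : Type :=
  ↥(⋀[K]^3 M) ⧸ wedgeHol K M

/-!
Let `e` generate `M` over `K[T;T⁻¹]` and let `d = dim M`. Since `ℋ(M)` identifies `β₁ ∧ β₂ ∧ β₃`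
with `tβ₁ ∧ tβ₂ ∧ tβ₃`, we have `tⁿe ∧ β ∧ γ = e ∧ t⁻ⁿβ ∧ t⁻ⁿγ` there, so the classes `e ∧ β ∧ γ`
span `ℋ(M)`. Such a class depends only on `β` and `γ` modulo `e`, so `ℋ(M)` is a quotient of the
second exterior power of a complement of `K e`, which has dimension `(d - 1).choose 2`.
For `M = K[T;T⁻¹]/(p)` we have `d ≤ deg p`: as `K[X]/(p)` is Artinian, it surjects onto its
localization `M`.
-/

section CommRing

variable {R M N : Type*} [CommRing R] [AddCommGroup M] [Module R M] [AddCommGroup N] [Module R N]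
  {n : ℕ}

lemma range_alternatingMapLinearEquiv (f : M [⋀^Fin n]→ₗ[R] N) :
    LinearMap.range (exteriorPower.alternatingMapLinearEquiv f) =
      Submodule.span R (Set.range f) := by
  rw [← Submodule.map_top, ← exteriorPower.ιMulti_span, Submodule.map_span, ← Set.range_comp]
  congr 2
  exact funext fun v ↦ exteriorPower.alternatingMapLinearEquiv_apply_ιMulti f v

lemma span_range_curryLeft_eq_of_codisjoint (f : M [⋀^Fin (n + 1)]→ₗ[R] N) (e : M)
    {P : Submodule R M} (hP : Codisjoint (R ∙ e) P) :
    Submodule.span R (Set.range (f.curryLeft e)) =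
      Submodule.span R (Set.range ((f.curryLeft e).compLinearMap P.subtype)) := by
  have hspan : Submodule.span R (insert e (P : Set M)) = ⊤ := by
    rw [Submodule.span_insert, Submodule.span_eq, hP.eq_top]
  apply le_antisymm
  · rw [← range_alternatingMapLinearEquiv, ← Submodule.map_top,
      ← exteriorPower.ιMulti_span_of_span R n M hspan, Submodule.map_span, Submodule.span_le]
    rintro _ ⟨_, ⟨v, hv, rfl⟩, rfl⟩
    rw [exteriorPower.alternatingMapLinearEquiv_apply_ιMulti]
    by_cases hmem : ∀ i, v i ∈ P
    · exact Submodule.subset_span ⟨fun i ↦ ⟨v i, hmem i⟩, rfl⟩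
    · push Not at hmem
      obtain ⟨i, hi⟩ := hmem
      have hvi : v i = e := (hv ⟨i, rfl⟩).resolve_right hi
      rw [AlternatingMap.curryLeft_apply_apply,
        f.map_eq_zero_of_eq (i := 0) (j := i.succ) _ (by simp [hvi]) (Fin.succ_ne_zero i).symm]
      exact Submodule.zero_mem _
  · apply Submodule.span_mono
    rintro _ ⟨v, rfl⟩
    exact ⟨_, rfl⟩

end CommRing

section Field

variable {K V W : Type*} [Field K] [AddCommGroup V] [Module K V] [Module.Finite K V]
  [AddCommGroup W] [Module K W] {n : ℕ}

lemma rank_span_range_alternatingMap_le_choose (f : V [⋀^Fin n]→ₗ[K] W) :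
    Module.rank K (Submodule.span K (Set.range f)) ≤ ((Module.finrank K V).choose n : ℕ) := by
  rw [← range_alternatingMapLinearEquiv, ← Module.finrank_eq_rank, Nat.cast_le,
    ← exteriorPower.finrank_eq K n]
  exact LinearMap.finrank_range_le _

lemma rank_span_range_curryLeft_le_choose (f : V [⋀^Fin (n + 1)]→ₗ[K] W) (e : V) :
    Module.rank K (Submodule.span K (Set.range (f.curryLeft e))) ≤
      ((Module.finrank K V - 1).choose n : ℕ) := by
  obtain rfl | he := eq_or_ne e 0
  · have hbot : Submodule.span K (Set.range (f.curryLeft 0)) = ⊥ := by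
      rw [Submodule.span_eq_bot]
      rintro _ ⟨v, rfl⟩
      rw [map_zero, AlternatingMap.zero_apply]
    rw [hbot, rank_bot]
    exact zero_le
  obtain ⟨P, hP⟩ := (K ∙ e).exists_isCompl
  have hfinrank : Module.finrank K P = Module.finrank K V - 1 := by
    rw [← Submodule.finrank_add_eq_of_isCompl hP, finrank_span_singleton he,
      Nat.add_sub_cancel_left]
  rw [span_range_curryLeft_eq_of_codisjoint f e hP.codisjoint, ← hfinrank]
  exact rank_span_range_alternatingMap_le_choose _

end Field

section Hcal

variable (K : Type) [Field K] {M : Type} [AddCommGroup M] [Module K[T;T⁻¹] M] [Module K M]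
  [IsScalarTower K K[T;T⁻¹] M]

/-- The alternating map sending `(β₁, β₂, β₃)` to the class of `β₁ ∧ β₂ ∧ β₃` in `ℋ(M)`. -/
def hcalMk : M [⋀^Fin 3]→ₗ[K] Hcal K M :=
  (wedgeHol K M).mkQ.compAlternatingMap (exteriorPower.ιMulti K 3)

lemma span_range_hcalMk : Submodule.span K (Set.range (hcalMk K (M := M))) = ⊤ := by
  have hrange : Set.range (hcalMk K (M := M)) =
      (wedgeHol K M).mkQ '' Set.range (exteriorPower.ιMulti K 3) :=
    Set.range_comp (wedgeHol K M).mkQ _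
  rw [hrange, ← Submodule.map_span, exteriorPower.ιMulti_span, Submodule.map_top,
    Submodule.range_mkQ]

lemma hcalMk_T_one_smul (v : Fin 3 → M) :
    hcalMk K ((T 1 : K[T;T⁻¹]) • v) = hcalMk K v :=
  ((Submodule.Quotient.eq (wedgeHol K M)).2 (Submodule.subset_span ⟨v 0, v 1, v 2, rfl⟩)).symm

lemma hcalMk_T_smul (n : ℤ) (v : Fin 3 → M) :
    hcalMk K ((T n : K[T;T⁻¹]) • v) = hcalMk K v := by
  induction n using Int.induction_on generalizing v with
  | zero => rw [T_zero, one_smul]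
  | succ n ih => rw [T_add, mul_smul, ih, hcalMk_T_one_smul]
  | pred n ih => rw [← hcalMk_T_one_smul, smul_smul, ← T_add, add_sub_cancel, ih]

lemma curryLeft_hcalMk_T_smul (n : ℤ) (x : M) (v : Fin 2 → M) :
    (hcalMk K).curryLeft ((T n : K[T;T⁻¹]) • x) v =
      (hcalMk K).curryLeft x ((T (-n) : K[T;T⁻¹]) • v) := by
  rw [AlternatingMap.curryLeft_apply_apply, AlternatingMap.curryLeft_apply_apply,
    ← hcalMk_T_smul K (-n), Matrix.smul_cons, smul_smul, ← T_add, neg_add_cancel, T_zero, one_smul]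

lemma curryLeft_hcalMk_smul_mem_span (e : M) (p : K[T;T⁻¹]) (v : Fin 2 → M) :
    (hcalMk K).curryLeft (p • e) v ∈
      Submodule.span K (Set.range ((hcalMk K).curryLeft e)) := by
  induction p using LaurentPolynomial.induction_on' with
  | add p q hp hq =>
    rw [add_smul, map_add, AlternatingMap.add_apply]
    exact add_mem hp hq
  | C_mul_T n a =>
    rw [← smul_eq_C_mul, smul_assoc, map_smul, AlternatingMap.smul_apply, curryLeft_hcalMk_T_smul]
    exact Submodule.smul_mem _ a (Submodule.subset_span ⟨_, rfl⟩)

lemma span_range_curryLeft_hcalMk {e : M} (he : Submodule.span K[T;T⁻¹] {e} = ⊤) :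
    Submodule.span K (Set.range ((hcalMk K).curryLeft e)) = ⊤ := by
  rw [eq_top_iff, ← span_range_hcalMk, Submodule.span_le]
  rintro _ ⟨v, rfl⟩
  obtain ⟨p, hp⟩ := Submodule.mem_span_singleton.1 (he ▸ Submodule.mem_top : v 0 ∈ _)
  rw [← Matrix.cons_head_tail v, ← AlternatingMap.curryLeft_apply_apply, Matrix.vecHead, ← hp]
  exact curryLeft_hcalMk_smul_mem_span K e p _

lemma rank_hcal_le_choose_of_span_singleton_eq_top [Module.Finite K M] {e : M}
    (he : Submodule.span K[T;T⁻¹] {e} = ⊤) :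
    Module.rank K (Hcal K M) ≤ ((Module.finrank K M - 1).choose 2 : ℕ) := by
  rw [← rank_top, ← span_range_curryLeft_hcalMk K he]
  exact rank_span_range_curryLeft_le_choose (hcalMk K) e

end Hcal

lemma quotientMap_algebraMap_surjective {R S : Type*} [CommRing R] [CommRing S] [Algebra R S]
    (M : Submonoid R) [IsLocalization M S] {I : Ideal R} [IsArtinianRing (R ⧸ I)] {J : Ideal S}
    (hJ : J = I.map (algebraMap R S)) :
    Function.Surjective
      (Ideal.quotientMap J (algebraMap R S) (Ideal.map_le_iff_le_comap.1 hJ.ge)) := by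
  subst hJ
  have : IsLocalization (M.map (Ideal.Quotient.mk I)) (S ⧸ I.map (algebraMap R S)) :=
    IsLocalization.of_surjective M S _ Ideal.Quotient.mk_surjective _
      Ideal.Quotient.mk_surjective rfl (by simp only [Ideal.mk_ker, le_refl])
  exact IsArtinianRing.localization_surjective (M.map (Ideal.Quotient.mk I)) _

lemma span_toLaurent_eq_map {R : Type*} [CommRing R] (p : Polynomial R) :
    Ideal.span {p.toLaurent} = (Ideal.span {p}).map (algebraMap (Polynomial R) R[T;T⁻¹]) := by
  rw [Ideal.map_span, Set.image_singleton, algebraMap_eq_toLaurent]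

lemma finite_quotient_span_singleton {K : Type*} [Field K] {p : Polynomial K} (hp : p ≠ 0) :
    Module.Finite K (Polynomial K ⧸ Ideal.span {p}) :=
  (AdjoinRoot.powerBasis hp).finite

section LQuot

variable {K : Type} [Field K]

/-- The map `K[X]/(p) → K[T;T⁻¹]/(p)` induced by the inclusion of polynomials into Laurent
polynomials, through which the dimension of the target is bounded. -/
def quotientToLQuot (p : Polynomial K) :
    (Polynomial K ⧸ Ideal.span {p}) →ₐ[K] LQuot K p.toLaurent :=
  Ideal.quotientMapₐ _ Polynomial.toLaurentAlg
    (Ideal.map_le_iff_le_comap.1 (span_toLaurent_eq_map p).ge)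

lemma quotientToLQuot_surjective {p : Polynomial K} (hp : p ≠ 0) :
    Function.Surjective (quotientToLQuot p) := by
  have := finite_quotient_span_singleton hp
  have : IsArtinianRing (Polynomial K ⧸ Ideal.span {p}) := .of_finite K _
  exact quotientMap_algebraMap_surjective (.powers Polynomial.X) (span_toLaurent_eq_map p)

lemma finite_lquot_toLaurent {p : Polynomial K} (hp : p ≠ 0) :
    Module.Finite K (LQuot K p.toLaurent) :=
  have := finite_quotient_span_singleton hp
  .of_surjective (quotientToLQuot p).toLinearMap (quotientToLQuot_surjective hp)

lemma finrank_lquot_toLaurent_le {p : Polynomial K} (hp : p ≠ 0) :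
    Module.finrank K (LQuot K p.toLaurent) ≤ p.natDegree := by
  have := finite_quotient_span_singleton hp
  rw [← finrank_quotient_span_eq_natDegree]
  exact LinearMap.finrank_le_finrank_of_surjective (f := (quotientToLQuot p).toLinearMap)
    (quotientToLQuot_surjective hp)

end LQuot

theorem stmt5_general {K : Type} [Field K] {p : Polynomial K} (hp : p ≠ 0) :
    Module.rank K (Hcal K (LQuot K p.toLaurent)) ≤
      ((p.natDegree - 1) * (p.natDegree - 2) / 2 : ℕ) := by
  have := finite_lquot_toLaurent hp
  calc
    Module.rank K (Hcal K (LQuot K p.toLaurent))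
    _ ≤ ((Module.finrank K (LQuot K p.toLaurent) - 1).choose 2 : ℕ) :=
      rank_hcal_le_choose_of_span_singleton_eq_top K (Ideal.Quotient.span_singleton_one _)
    _ ≤ ((p.natDegree - 1).choose 2 : ℕ) := by
      gcongr
      exact finrank_lquot_toLaurent_le hp
    _ = ((p.natDegree - 1) * (p.natDegree - 2) / 2 : ℕ) := by
      rw [Nat.choose_two_right, Nat.sub_sub]

theorem stmt5 (z : ℂ) (hz : z ^ 3 = 1) (m : ℕ) (hm : 1 ≤ m) :
    Module.rank ℂ (Hcal ℂ (LQuot ℂ ((T 1 - C z) ^ m))) ≤ ((m - 1) * (m - 2) / 2 : ℕ) := by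
  have := stmt5_general (pow_ne_zero m (Polynomial.X_sub_C_ne_zero z))
  rwa [map_pow, map_sub, Polynomial.toLaurent_X, Polynomial.toLaurent_C,
    Polynomial.natDegree_pow, Polynomial.natDegree_X_sub_C, mul_one] at this
end
end

section
/- Let z, w be nonzero complex numbers and m, n ≥ 1 integers. Set A = ℂ[t^{±1}]/((t − z)^m) and B = ℂ[t^{±1}]/((t − w)^n), and let W be the quotient of (Λ²_ℂ A) ⊗_ℂ B by the ℂ-subspace spanned by all elements (α∧α')⊗β − (tα∧tα')⊗tβ with α, α' ∈ A and β ∈ B. Then W is nonzero if and only if z²w = 1 and m ≥ 2. -/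
open LaurentPolynomial TensorProduct

set_option synthInstance.maxHeartbeats 1000000
set_option maxHeartbeats 1000000
noncomputable section

/-- The wedge `a ∧ b` as an element of the second exterior power. -/
def wedge2 (K : Type) [Field K] (M : Type) [AddCommGroup M] [Module K M] (a b : M) :
    ⋀[K]^2 M :=
  ⟨ExteriorAlgebra.ιMulti K 2 ![a, b],
    ExteriorAlgebra.ιMulti_range K 2 (Set.mem_range_self _)⟩

/-- The subspace of `(Λ² A) ⊗ B` spanned by the elements
`(α ∧ α') ⊗ β - (tα ∧ tα') ⊗ tβ`. -/
def w2Hol (K : Type) [Field K] (A B : Type) [AddCommGroup A] [AddCommGroup B]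
    [Module (LaurentPolynomial K) A] [Module (LaurentPolynomial K) B]
    [Module K A] [Module K B]
    [IsScalarTower K (LaurentPolynomial K) A] [IsScalarTower K (LaurentPolynomial K) B] :
    Submodule K (↥(⋀[K]^2 A) ⊗[K] B) :=
  Submodule.span K { x | ∃ (a a' : A) (b : B),
    x = (wedge2 K A a a') ⊗ₜ[K] b -
      (wedge2 K A ((T 1 : LaurentPolynomial K) • a) ((T 1 : LaurentPolynomial K) • a')) ⊗ₜ[K]
        ((T 1 : LaurentPolynomial K) • b) }

/-- The quotient `W` of `(Λ² A) ⊗ B` by the span of the elements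
`(α ∧ α') ⊗ β - (tα ∧ tα') ⊗ tβ`. -/
abbrev w2Quot (K : Type) [Field K] (A B : Type) [AddCommGroup A] [AddCommGroup B]
    [Module (LaurentPolynomial K) A] [Module (LaurentPolynomial K) B]
    [Module K A] [Module K B]
    [IsScalarTower K (LaurentPolynomial K) A] [IsScalarTower K (LaurentPolynomial K) B] :
    Type :=
  @HasQuotient.Quotient _ _ (Submodule.hasQuotient (R := K) (M := ↥(⋀[K]^2 A) ⊗[K] B))
    (w2Hol K A B)

/-!
`W` is the cokernel of `1 - Φ`, where `Φ = Λ²t ⊗ t`. Since `t - z` and `t - w` are nilpotent on `A`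
and `B`, the operator `Φ - z²w` is nilpotent. If `z²w ≠ 1`, then `1 - Φ` is invertible and
`W = 0`; if `z²w = 1`, then `1 - Φ` is nilpotent, so it is surjective only when `Λ²A ⊗ B = 0`.
As `dim A = m` and `dim B = n`, the space `Λ²A ⊗ B` has dimension `m.choose 2 * n`.
-/

section Nilpotent

variable {R M N : Type*} [CommRing R] [AddCommGroup M] [AddCommGroup N] [Module R M] [Module R N]

lemma isNilpotent_tensorProductMap_left {f : Module.End R M} (hf : IsNilpotent f)
    (g : Module.End R N) : IsNilpotent (TensorProduct.map f g : Module.End R (M ⊗[R] N)) := by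
  obtain ⟨k, hk⟩ := hf
  exact ⟨k, by rw [TensorProduct.map_pow, hk, TensorProduct.map_zero_left]⟩

lemma isNilpotent_tensorProductMap_right (f : Module.End R M) {g : Module.End R N}
    (hg : IsNilpotent g) : IsNilpotent (TensorProduct.map f g : Module.End R (M ⊗[R] N)) := by
  obtain ⟨k, hk⟩ := hg
  exact ⟨k, by rw [TensorProduct.map_pow, hk, TensorProduct.map_zero_right]⟩

lemma isNilpotent_tensorProductMap_sub_algebraMap {f : Module.End R M} {g : Module.End R N}
    {a b : R} (hf : IsNilpotent (f - algebraMap R _ a)) (hg : IsNilpotent (g - algebraMap R _ b)) :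
    IsNilpotent (TensorProduct.map f g - algebraMap R (Module.End R (M ⊗[R] N)) (a * b)) := by
  have split : TensorProduct.map f g - algebraMap R (Module.End R (M ⊗[R] N)) (a * b) =
      TensorProduct.map (f - algebraMap R _ a) g +
        TensorProduct.map (algebraMap R _ a) (g - algebraMap R _ b) := by
    ext x y
    simp [TensorProduct.sub_tmul, TensorProduct.tmul_sub, TensorProduct.smul_tmul', smul_smul,
      mul_comm b a]
  have comm : Commute (TensorProduct.map (f - algebraMap R _ a) g : Module.End R (M ⊗[R] N))
      (TensorProduct.map (algebraMap R _ a) (g - algebraMap R _ b)) := by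
    rw [Commute, SemiconjBy, ← TensorProduct.map_mul, ← TensorProduct.map_mul,
      (Algebra.commute_algebraMap_left a _).eq,
      ((Commute.refl g).sub_right (Algebra.commute_algebraMap_right b g)).eq]
  rw [split]
  exact comm.isNilpotent_add (isNilpotent_tensorProductMap_left hf g)
    (isNilpotent_tensorProductMap_right _ hg)

lemma isNilpotent_of_surjective_of_comp_eq {f : Module.End R M} {g : Module.End R N}
    {π : M →ₗ[R] N} (hπ : Function.Surjective π) (h : g ∘ₗ π = π ∘ₗ f) (hf : IsNilpotent f) :
    IsNilpotent g := by
  obtain ⟨k, hk⟩ := hf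
  refine ⟨k, LinearMap.ext fun y => ?_⟩
  obtain ⟨x, rfl⟩ := hπ y
  have hpow := LinearMap.congr_fun (Module.End.commute_pow_left_of_commute h k) x
  simpa [hk] using hpow

lemma subsingleton_of_isNilpotent_of_surjective {f : Module.End R M} (hf : IsNilpotent f)
    (hsurj : Function.Surjective f) : Subsingleton M := by
  obtain ⟨k, hk⟩ := hf
  refine subsingleton_of_forall_eq 0 fun y => ?_
  obtain ⟨x, rfl⟩ : ∃ x, (f ^ k) x = y := by
    rw [Module.End.coe_pow]
    exact hsurj.iterate k y
  simp [hk]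

end Nilpotent

lemma nontrivial_quotient_range_one_sub_iff {K V : Type*} [Field K] [AddCommGroup V] [Module K V]
    {f : Module.End K V} {c : K} (hf : IsNilpotent (f - algebraMap K _ c)) :
    Nontrivial (V ⧸ LinearMap.range (1 - f)) ↔ c = 1 ∧ Nontrivial V := by
  rw [Submodule.Quotient.nontrivial_iff, Ne, LinearMap.range_eq_top]
  rcases eq_or_ne c 1 with rfl | hc
  · have hnil : IsNilpotent (1 - f) := by simpa using hf.neg
    simp only [true_and, ← not_subsingleton_iff_nontrivial, not_iff_not]
    exact ⟨subsingleton_of_isNilpotent_of_surjective hnil,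
      fun _ => Function.surjective_to_subsingleton _⟩
  · have hunit : IsUnit (1 - f) := by
      have h := hf.neg.isUnit_add_right_of_commute
        (((sub_ne_zero.mpr hc.symm).isUnit).map (algebraMap K (Module.End K V)))
        (Algebra.commute_algebraMap_right _ _)
      simpa using h
    simp [hc, ((Module.End.isUnit_iff _).mp hunit).surjective]

section ExteriorSquare

variable {R M : Type*} [CommRing R] [AddCommGroup M] [Module R M]

/-- The canonical projection `a ⊗ b ↦ a ∧ b` onto the exterior square. It transports spectral
information from `f ⊗ f` to `Λ²f`. -/
def tensorToExteriorSquare (R M : Type*) [CommRing R] [AddCommGroup M] [Module R M] :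
    M ⊗[R] M →ₗ[R] ⋀[R]^2 M :=
  TensorProduct.lift <| LinearMap.mk₂ R (fun a b => exteriorPower.ιMulti R 2 ![a, b])
    (fun a a' b => by ext; simp [ExteriorAlgebra.ιMulti_apply, add_mul])
    (fun c a b => by ext; simp [ExteriorAlgebra.ιMulti_apply])
    (fun a b b' => by ext; simp [ExteriorAlgebra.ιMulti_apply, mul_add])
    (fun c a b => by ext; simp [ExteriorAlgebra.ιMulti_apply])

@[simp]
lemma tensorToExteriorSquare_tmul (a b : M) :
    tensorToExteriorSquare R M (a ⊗ₜ b) = exteriorPower.ιMulti R 2 ![a, b] :=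
  rfl

lemma tensorToExteriorSquare_surjective : Function.Surjective (tensorToExteriorSquare R M) := by
  rw [← LinearMap.range_eq_top, eq_top_iff, ← exteriorPower.ιMulti_span, Submodule.span_le]
  rintro _ ⟨v, rfl⟩
  have hv : ![v 0, v 1] = v := by
    ext i
    fin_cases i <;> rfl
  exact ⟨v 0 ⊗ₜ v 1, by rw [tensorToExteriorSquare_tmul, hv]⟩

lemma exteriorPowerMap_comp_tensorToExteriorSquare (f : Module.End R M) :
    exteriorPower.map 2 f ∘ₗ tensorToExteriorSquare R M =
      tensorToExteriorSquare R M ∘ₗ TensorProduct.map f f := by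
  ext a b
  simp [ExteriorAlgebra.ιMulti_apply, Matrix.vecTail]

lemma isNilpotent_exteriorPowerMap_two_sub_algebraMap {f : Module.End R M} {a : R}
    (hf : IsNilpotent (f - algebraMap R _ a)) :
    IsNilpotent (exteriorPower.map 2 f - algebraMap R (Module.End R (⋀[R]^2 M)) (a ^ 2)) := by
  refine isNilpotent_of_surjective_of_comp_eq tensorToExteriorSquare_surjective ?_
    (isNilpotent_tensorProductMap_sub_algebraMap hf hf)
  rw [LinearMap.sub_comp, exteriorPowerMap_comp_tensorToExteriorSquare, LinearMap.comp_sub, pow_two]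
  congr 1
  exact LinearMap.ext fun x => (map_smul (tensorToExteriorSquare R M) (a * a) x).symm

end ExteriorSquare

lemma nontrivial_exteriorSquare_tensorProduct_iff {K V U : Type*} [Field K] [AddCommGroup V]
    [AddCommGroup U] [Module K V] [Module K U] [FiniteDimensional K V] [FiniteDimensional K U] :
    Nontrivial (⋀[K]^2 V ⊗[K] U) ↔ 2 ≤ Module.finrank K V ∧ 0 < Module.finrank K U := by
  rw [← Module.finrank_pos_iff (R := K), Module.finrank_tensorProduct, exteriorPower.finrank_eq,
    Nat.pos_iff_ne_zero, Nat.mul_ne_zero_iff, Nat.choose_ne_zero_iff, Nat.pos_iff_ne_zero]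

lemma wedge2_eq_ιMulti {K M : Type} [Field K] [AddCommGroup M] [Module K M] (a b : M) :
    wedge2 K M a b = exteriorPower.ιMulti K 2 ![a, b] :=
  rfl

lemma span_wedge2_tmul_eq_top {K A B : Type} [Field K] [AddCommGroup A] [AddCommGroup B]
    [Module K A] [Module K B] :
    Submodule.span K {x | ∃ (a a' : A) (b : B), wedge2 K A a a' ⊗ₜ[K] b = x} = ⊤ := by
  rw [eq_top_iff, ← TensorProduct.span_tmul_eq_top, Submodule.span_le]
  rintro _ ⟨ω, b, rfl⟩
  obtain ⟨x, rfl⟩ := tensorToExteriorSquare_surjective ω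
  induction x using TensorProduct.induction_on with
  | zero => simp
  | add x y hx hy =>
    rw [map_add, TensorProduct.add_tmul]
    exact Submodule.add_mem _ hx hy
  | tmul a a' => exact Submodule.subset_span ⟨a, a', b, rfl⟩

section Coinvariants

-- `Module.End K (⋀[K]^2 A ⊗[K] B)` finds its ring structure only at this search depth.
set_option maxSynthPendingDepth 4

variable {K A B : Type} [Field K] [AddCommGroup A] [AddCommGroup B]
  [Module (LaurentPolynomial K) A] [Module (LaurentPolynomial K) B] [Module K A] [Module K B]
  [IsScalarTower K (LaurentPolynomial K) A] [IsScalarTower K (LaurentPolynomial K) B]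

/-- The operator `Λ²t ⊗ t` on `Λ²A ⊗ B`, whose coinvariants are `w2Quot K A B`. -/
def w2Action (K A B : Type) [Field K] [AddCommGroup A] [AddCommGroup B]
    [Module (LaurentPolynomial K) A] [Module (LaurentPolynomial K) B] [Module K A] [Module K B]
    [IsScalarTower K (LaurentPolynomial K) A] [IsScalarTower K (LaurentPolynomial K) B] :
    Module.End K (⋀[K]^2 A ⊗[K] B) :=
  TensorProduct.map (exteriorPower.map 2 (Algebra.lsmul K K A (T 1 : LaurentPolynomial K)))
    (Algebra.lsmul K K B (T 1 : LaurentPolynomial K))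

lemma w2Action_wedge2_tmul (a a' : A) (b : B) :
    w2Action K A B (wedge2 K A a a' ⊗ₜ b) =
      wedge2 K A ((T 1 : LaurentPolynomial K) • a) ((T 1 : LaurentPolynomial K) • a') ⊗ₜ
        ((T 1 : LaurentPolynomial K) • b) := by
  rw [w2Action, wedge2_eq_ιMulti, TensorProduct.map_tmul, exteriorPower.map_apply_ιMulti,
    wedge2_eq_ιMulti]
  congr 2
  ext i
  fin_cases i <;> rfl

lemma w2Hol_eq_range :
    w2Hol K A B = LinearMap.range (1 - w2Action K A B : Module.End K (⋀[K]^2 A ⊗[K] B)) := by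
  rw [LinearMap.range_eq_map, ← span_wedge2_tmul_eq_top, Submodule.map_span, w2Hol]
  congr 1
  ext x
  simp [w2Action_wedge2_tmul, eq_comm]

theorem nontrivial_w2Quot_iff {z w : K}
    (hA : IsNilpotent (Algebra.lsmul K K A (T 1 : LaurentPolynomial K) - algebraMap K _ z))
    (hB : IsNilpotent (Algebra.lsmul K K B (T 1 : LaurentPolynomial K) - algebraMap K _ w)) :
    Nontrivial (w2Quot K A B) ↔ z ^ 2 * w = 1 ∧ Nontrivial (⋀[K]^2 A ⊗[K] B) := by
  have hΦ : IsNilpotent (w2Action K A B - algebraMap K (Module.End K _) (z ^ 2 * w)) :=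
    isNilpotent_tensorProductMap_sub_algebraMap
      (isNilpotent_exteriorPowerMap_two_sub_algebraMap hA) hB
  rw [w2Quot, w2Hol_eq_range]
  exact nontrivial_quotient_range_one_sub_iff hΦ

end Coinvariants

section LQuot

lemma isUnit_quotientMk_of_isCoprime {R : Type*} [CommRing R] {p x : R} (h : IsCoprime p x) :
    IsUnit (Ideal.Quotient.mk (Ideal.span {p}) x) := by
  obtain ⟨u, v, huv⟩ := h
  refine .of_mul_eq_one (Ideal.Quotient.mk _ v) ?_
  rw [← map_mul, ← map_one (Ideal.Quotient.mk _), Ideal.Quotient.mk_eq_mk_iff_sub_mem,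
    Ideal.mem_span_singleton]
  exact ⟨-u, by linear_combination huv⟩

lemma bijective_quotientMap_of_isLocalization {R S : Type*} [CommRing R] [CommRing S] [Algebra R S]
    (M : Submonoid R) [IsLocalization M S] {I : Ideal R} {J : Ideal S}
    (hM : ∀ x ∈ M, IsUnit (Ideal.Quotient.mk I x)) (hIJ : I.map (algebraMap R S) = J) :
    Function.Bijective
      (Ideal.quotientMap J (algebraMap R S) (Ideal.map_le_iff_le_comap.mp hIJ.le)) := by
  subst hIJ
  refine (IsLocalization.atUnits (R ⧸ I) (Algebra.algebraMapSubmonoid (R ⧸ I) M)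
    (S := S ⧸ I.map (algebraMap R S)) ?_).bijective
  rintro _ ⟨x, hx, rfl⟩
  exact hM x hx

variable {K : Type} [Field K]

/-- The isomorphism `K[X] ⧸ (p) ≃ K[t^{±1}] ⧸ (p)` induced by the inclusion of polynomials, for `p`
prime to `X`: inverting `X` changes nothing where `X` is already a unit. -/
def polynomialQuotientEquivLQuot {p : Polynomial K} (hp : IsCoprime p Polynomial.X) :
    (Polynomial K ⧸ Ideal.span {p}) ≃ₐ[K] LQuot K (Polynomial.toLaurent p) :=
  have hmap : (Ideal.span {p}).map (algebraMap (Polynomial K) (LaurentPolynomial K)) =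
      Ideal.span {Polynomial.toLaurent p} := by
    rw [Ideal.map_span, Set.image_singleton, algebraMap_eq_toLaurent]
  have hunits : ∀ x ∈ Submonoid.powers Polynomial.X,
      IsUnit (Ideal.Quotient.mk (Ideal.span {p}) x) := by
    rintro _ ⟨k, rfl⟩
    exact isUnit_quotientMk_of_isCoprime hp.pow_right
  AlgEquiv.ofBijective
    (Ideal.quotientMapₐ _ Polynomial.toLaurentAlg (Ideal.map_le_iff_le_comap.mp hmap.le))
    (bijective_quotientMap_of_isLocalization (Submonoid.powers Polynomial.X) hunits hmap)

lemma toLaurent_X_sub_C_pow (z : K) (m : ℕ) :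
    Polynomial.toLaurent ((Polynomial.X - Polynomial.C z) ^ m) = (T 1 - C z) ^ m := by
  simp

lemma isCoprime_X_sub_C_pow_X {z : K} (hz : z ≠ 0) (m : ℕ) :
    IsCoprime ((Polynomial.X - Polynomial.C z) ^ m) Polynomial.X := by
  have h := Polynomial.isCoprime_X_sub_C_of_isUnit_sub (a := z) (b := 0) (by simpa using hz)
  rw [map_zero, sub_zero] at h
  exact h.pow_left

lemma finiteDimensional_LQuot {z : K} (hz : z ≠ 0) (m : ℕ) :
    FiniteDimensional K (LQuot K ((T 1 - C z) ^ m)) := by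
  have := ((Polynomial.monic_X_sub_C z).pow m).finite_quotient
  rw [← toLaurent_X_sub_C_pow]
  exact .equiv (polynomialQuotientEquivLQuot (isCoprime_X_sub_C_pow_X hz m)).toLinearEquiv

lemma finrank_LQuot {z : K} (hz : z ≠ 0) (m : ℕ) :
    Module.finrank K (LQuot K ((T 1 - C z) ^ m)) = m := by
  rw [← toLaurent_X_sub_C_pow,
    ← (polynomialQuotientEquivLQuot (isCoprime_X_sub_C_pow_X hz m)).toLinearEquiv.finrank_eq,
    finrank_quotient_span_eq_natDegree, Polynomial.natDegree_pow, Polynomial.natDegree_X_sub_C,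
    mul_one]

lemma isNilpotent_lsmul_T_sub_algebraMap (z : K) (m : ℕ) :
    IsNilpotent (Algebra.lsmul K K (LQuot K ((T 1 - C z) ^ m)) (T 1 : LaurentPolynomial K) -
      algebraMap K _ z) := by
  refine ⟨m, ?_⟩
  rw [← (Algebra.lsmul (A := LaurentPolynomial K) K K (LQuot K ((T 1 - C z) ^ m))).commutes,
    LaurentPolynomial.algebraMap_apply, Algebra.algebraMap_self_apply, ← map_sub, ← map_pow]
  refine LinearMap.ext fun x => ?_
  obtain ⟨f, rfl⟩ := Ideal.Quotient.mk_surjective x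
  change Ideal.Quotient.mk (Ideal.span {(T 1 - C z) ^ m}) ((T 1 - C z) ^ m * f) = 0
  rw [map_mul, Ideal.Quotient.mk_singleton_self, zero_mul]

end LQuot

theorem stmt6_general {K : Type} [Field K] (z w : K) (m n : ℕ) (hn : 1 ≤ n) :
    Nontrivial (w2Quot K (LQuot K ((T 1 - C z) ^ m)) (LQuot K ((T 1 - C w) ^ n))) ↔
      z ^ 2 * w = 1 ∧ 2 ≤ m := by
  rw [nontrivial_w2Quot_iff (isNilpotent_lsmul_T_sub_algebraMap z m)
    (isNilpotent_lsmul_T_sub_algebraMap w n)]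
  refine and_congr_right fun h => ?_
  have hz : z ≠ 0 := by
    rintro rfl
    simp at h
  have hw : w ≠ 0 := right_ne_zero_of_mul_eq_one h
  have := finiteDimensional_LQuot hz m
  have := finiteDimensional_LQuot hw n
  rw [nontrivial_exteriorSquare_tensorProduct_iff, finrank_LQuot hz, finrank_LQuot hw,
    and_iff_left (Nat.lt_of_succ_le hn)]

theorem stmt6 (z w : ℂ) (hz : z ≠ 0) (hw : w ≠ 0) (m n : ℕ) (hm : 1 ≤ m) (hn : 1 ≤ n) :
    Nontrivial (w2Quot ℂ (LQuot ℂ ((T 1 - C z) ^ m)) (LQuot ℂ ((T 1 - C w) ^ n))) ↔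
      z ^ 2 * w = 1 ∧ 2 ≤ m := by
  exact stmt6_general z w m n hn
end
end
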